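/- arXiv:2310.09287 — 2 statements merged into one kernel-verified Lean document; each statement's English description precedes it below -/
import Mathlib

section
/- Let S be a MANS-semigroup with msg(S) = {n₁ < n₂ < ⋯ < n_e < n_{e+1}}, where e ≥ 2. Then S' = ⟨n₁, n₂, …, n_e⟩ (the semigroup generated by all minimal generators except the largest) is a MANS-semigroup with e(S') = e(S) − 1. -/
/-- `S ⊆ ℕ` is a numerical semigroup: contains `0`, closed under addition,
and has finite complement in `ℕ`. -/
def IsNumSgp (S : Set ℕ) : Prop :=
  0 ∈ S ∧ (∀ a ∈ S, ∀ b ∈ S, a + b ∈ S) ∧ Sᶜ.Finite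

/-- `⟨A⟩`: the additive submonoid of `ℕ` generated by `A`, viewed as a set. -/
def gen (A : Set ℕ) : Set ℕ := (AddSubmonoid.closure A : Set ℕ)

/-- The multiplicity `m(S)`: the least nonzero element of `S`. -/
noncomputable def nsMult (S : Set ℕ) : ℕ := sInf {x | x ∈ S ∧ x ≠ 0}

/-- The minimal system of generators of `S`: the nonzero elements of `S` that are
not a sum of two nonzero elements of `S`. -/
def msg (S : Set ℕ) : Set ℕ :=
  {x | x ∈ S ∧ x ≠ 0 ∧ ∀ a ∈ S, a ≠ 0 → ∀ b ∈ S, b ≠ 0 → x ≠ a + b}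

/-- The ratio `r(S)`: the second smallest minimal generator of `S`. -/
noncomputable def nsRatio (S : Set ℕ) : ℕ := sInf (msg S \ {nsMult S})

/-- The maximum minimal generator `M(S)`. -/
noncomputable def nsMaxGen (S : Set ℕ) : ℕ := sSup (msg S)

/-- The Apéry set `Ap(S, n) = {s ∈ S : s - n ∉ S}`. -/
def AperySet (S : Set ℕ) (n : ℕ) : Set ℕ :=
  {s | s ∈ S ∧ ¬ ∃ y ∈ S, y + n = s}

/-- `w(i)`: the least element of `S` congruent to `i` modulo `n`. -/
noncomputable def aperyW (S : Set ℕ) (n i : ℕ) : ℕ :=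
  sInf {s | s ∈ S ∧ s % n = i % n}

/-- A MANS-semigroup: a numerical semigroup whose Apéry set with respect to the
multiplicity is monotone, i.e. `w(1) < w(2) < ⋯ < w(m(S) - 1)`. -/
def IsMANS (S : Set ℕ) : Prop :=
  IsNumSgp S ∧ ∀ i : ℕ, 0 < i → i + 1 < nsMult S →
    aperyW S (nsMult S) i < aperyW S (nsMult S) (i + 1)

/-- The Frobenius number `F(S)`: the greatest integer not in `S`. -/
noncomputable def nsFrob (S : Set ℕ) : ℕ := sSup {x | x ∉ S}

/-- The genus `g(S)`: the number of gaps of `S`. -/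
noncomputable def nsGenus (S : Set ℕ) : ℕ := Set.ncard {x | x ∉ S}

/-- The set of pseudo-Frobenius numbers of `S`: integers `x ∉ S` such that
`x + s ∈ S` for every nonzero `s ∈ S`. -/
def nsPF (S : Set ℕ) : Set ℤ :=
  {x : ℤ | x ∉ ((Nat.cast : ℕ → ℤ) '' S) ∧
    ∀ s ∈ S, s ≠ 0 → x + (s : ℤ) ∈ ((Nat.cast : ℕ → ℤ) '' S)}

/-- The type `t(S)`: the number of pseudo-Frobenius numbers of `S`. -/
noncomputable def nsType (S : Set ℕ) : ℕ := (nsPF S).ncard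

/-- `S` is pseudo-symmetric iff `F(S) = 2 g(S) - 2`. -/
def IsPseudoSymmetric (S : Set ℕ) : Prop :=
  (nsFrob S : ℤ) = 2 * (nsGenus S : ℤ) - 2

theorem numsgp_mul {S : Set ℕ} (hS : IsNumSgp S) {m : ℕ} (hm : m ∈ S) (k : ℕ) : m * k ∈ S := by
  induction k with
  | zero => simpa using hS.1
  | succ k ih => rw [Nat.mul_succ]; exact hS.2.1 _ ih _ hm

theorem numsgp_large {S : Set ℕ} (hS : IsNumSgp S) : ∃ N, ∀ x, N ≤ x → x ∈ S := by
  obtain ⟨B, hB⟩ := hS.2.2.bddAbove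
  refine ⟨B + 1, fun x hx => ?_⟩
  by_contra h
  have := hB h
  omega

theorem aperyW_mem {S : Set ℕ} (hS : IsNumSgp S) {m : ℕ} (hm : 0 < m) (i : ℕ) :
    aperyW S m i ∈ S ∧ aperyW S m i % m = i % m := by
  obtain ⟨N, hN⟩ := numsgp_large hS
  have hne : {s | s ∈ S ∧ s % m = i % m}.Nonempty := by
    refine ⟨i + m * N, hN _ ?_, by simp⟩
    nlinarith
  exact Nat.sInf_mem hne

theorem aperyW_le {S : Set ℕ} {m i s : ℕ} (hs : s ∈ S) (h : s % m = i % m) :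
    aperyW S m i ≤ s := Nat.sInf_le ⟨hs, h⟩

theorem nsMult_mem {S : Set ℕ} (hS : IsNumSgp S) : nsMult S ∈ S ∧ nsMult S ≠ 0 := by
  obtain ⟨N, hN⟩ := numsgp_large hS
  have hne : {x | x ∈ S ∧ x ≠ 0}.Nonempty := ⟨N + 1, hN _ (by omega), by omega⟩
  exact Nat.sInf_mem hne

theorem nsMult_le {S : Set ℕ} {x : ℕ} (hx : x ∈ S) (h0 : x ≠ 0) : nsMult S ≤ x :=
  Nat.sInf_le ⟨hx, h0⟩

theorem msg_not_dvd {S : Set ℕ} (hS : IsNumSgp S) {g : ℕ} (hg : g ∈ msg S)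
    (hgm : g ≠ nsMult S) : ¬ nsMult S ∣ g := by
  rintro ⟨q, rfl⟩
  obtain ⟨hm, hm0⟩ := nsMult_mem hS
  rcases q with _ | _ | q
  · exact hg.2.1 (by simp)
  · simp at hgm
  · refine hg.2.2 (nsMult S * (q + 1)) (numsgp_mul hS hm _) ?_ (nsMult S) hm hm0 (by ring)
    exact Nat.mul_ne_zero hm0 (by omega)

theorem msg_pred {S : Set ℕ} (hM : IsMANS S) {g : ℕ} (hg : g ∈ msg S)
    (hgm : g ≠ nsMult S) : ∃ x ∈ S, x < g ∧ x + 1 ≡ g [MOD nsMult S] := by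
  have hS := hM.1
  obtain ⟨hm, hm0⟩ := nsMult_mem hS
  have hnd := msg_not_dvd hS hg hgm
  have hlt : g % nsMult S < nsMult S := Nat.mod_lt _ (by omega)
  rcases hj : g % nsMult S with _ | _ | j
  · exact absurd (Nat.dvd_of_mod_eq_zero hj) hnd
  · refine ⟨0, hS.1, Nat.pos_of_ne_zero hg.2.1, ?_⟩
    unfold Nat.ModEq
    rw [hj]
    exact Nat.mod_eq_of_lt (by omega)
  · have h1 := hM.2 (j + 1) (by omega) (by omega)
    obtain ⟨h2, h3⟩ := aperyW_mem hS (Nat.pos_of_ne_zero hm0) (j + 1)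
    refine ⟨_, h2, lt_of_lt_of_le h1 (aperyW_le hg.1 ?_), ?_⟩
    · rw [hj]; exact (Nat.mod_eq_of_lt (by omega)).symm
    · have h4 : aperyW S (nsMult S) (j + 1) ≡ j + 1 [MOD nsMult S] := h3
      refine (h4.add_right 1).trans ?_
      unfold Nat.ModEq
      rw [hj]; exact Nat.mod_eq_of_lt (by omega)

theorem stmt17 (S : Set ℕ) (e : ℕ) (he : 2 ≤ e) (n : Fin (e + 1) → ℕ)
    (hmono : StrictMono n) (hmsg : msg S = Set.range n) (hM : IsMANS S) :
    IsMANS (gen (Set.range fun i : Fin e => n i.castSucc)) ∧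
      (msg (gen (Set.range fun i : Fin e => n i.castSucc))).ncard = (msg S).ncard - 1 := by
  have hS := hM.1
  obtain ⟨hm, hm0⟩ := nsMult_mem hS
  have hnmsg : ∀ i, n i ∈ msg S := fun i => hmsg ▸ Set.mem_range_self i
  set A : Set ℕ := Set.range fun i : Fin e => n i.castSucc with hA
  have hAmsg : ∀ a ∈ A, a ∈ msg S := by
    rintro _ ⟨i, rfl⟩; exact hnmsg _
  have hAlt : ∀ a ∈ A, a < n (Fin.last e) := by
    rintro _ ⟨i, rfl⟩; exact hmono (Fin.castSucc_lt_last i)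
  have hAS : ∀ a ∈ A, a ∈ gen A := fun a ha => AddSubmonoid.subset_closure ha
  have hadd : ∀ a ∈ gen A, ∀ b ∈ gen A, a + b ∈ gen A := fun a ha b hb =>
    AddSubmonoid.add_mem _ ha hb
  have h0 : 0 ∈ gen A := AddSubmonoid.zero_mem _
  have hmul : ∀ a ∈ gen A, ∀ k : ℕ, k * a ∈ gen A := fun a ha k => by
    have := AddSubmonoid.nsmul_mem (AddSubmonoid.closure A) ha k
    rw [smul_eq_mul] at this; exact this
  have hsub : ∀ a ∈ gen A, a ∈ S := by
    intro a ha
    refine AddSubmonoid.closure_induction (motive := fun x _ => x ∈ S) ?_ hS.1 ?_ ha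
    · intro x hx; exact (hAmsg x hx).1
    · intro x y _ _ hx hy; exact hS.2.1 _ hx _ hy
  have hlow : ∀ x, x ∈ S → x < n (Fin.last e) → x ∈ gen A := by
    intro x
    induction x using Nat.strong_induction_on with
    | _ x ih =>
      intro hx hlt
      by_cases hx0 : x = 0
      · rw [hx0]; exact h0
      by_cases hxm : x ∈ msg S
      · have hx' := hxm
        rw [hmsg] at hx'
        obtain ⟨i, rfl⟩ := hx'
        have hi : i ≠ Fin.last e := by rintro rfl; omega
        refine hAS _ ⟨i.castPred hi, ?_⟩
        simp
      · have : ∃ a ∈ S, a ≠ 0 ∧ ∃ b ∈ S, b ≠ 0 ∧ x = a + b := by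
          by_contra hc
          push Not at hc
          exact hxm ⟨hx, hx0, hc⟩
        obtain ⟨a, ha, ha0, b, hb, hb0, rfl⟩ := this
        exact hadd _ (ih a (by omega) ha (by omega)) _ (ih b (by omega) hb (by omega))
  have h01 : n 0 < n ⟨1, by omega⟩ := hmono (by simp [Fin.lt_def])
  have h1A : n ⟨1, by omega⟩ ∈ A := ⟨⟨1, by omega⟩, rfl⟩
  have hmle : nsMult S ≤ n 0 := nsMult_le (hnmsg 0).1 (hnmsg 0).2.1
  have hmA : nsMult S ∈ gen A := by
    apply hlow _ hm
    have := hAlt _ h1A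
    omega
  have hmult : nsMult (gen A) = nsMult S := by
    apply le_antisymm (nsMult_le hmA hm0)
    have hne : {x | x ∈ gen A ∧ x ≠ 0}.Nonempty := ⟨_, hmA, hm0⟩
    obtain ⟨h2, h3⟩ := Nat.sInf_mem hne
    exact nsMult_le (hsub _ h2) h3
  have hpred : ∀ s ∈ gen A, ¬ nsMult S ∣ s →
      ∃ x ∈ gen A, x < s ∧ x + 1 ≡ s [MOD nsMult S] := by
    intro s hs
    refine AddSubmonoid.closure_induction
      (motive := fun s _ => ¬ nsMult S ∣ s → ∃ x ∈ gen A, x < s ∧ x + 1 ≡ s [MOD nsMult S]) ?_ ?_ ?_ hs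
    · intro g hg hnd
      obtain ⟨x, hx, hlt, hmod⟩ := msg_pred hM (hAmsg g hg) (by rintro rfl; simp at hnd)
      exact ⟨x, hlow x hx (hlt.trans (hAlt g hg)), hlt, hmod⟩
    · intro h; simp at h
    · intro a b ha hb iha ihb hnd
      by_cases hda : nsMult S ∣ a
      · have hdb : ¬ nsMult S ∣ b := fun h => hnd (dvd_add hda h)
        obtain ⟨x, hx, hlt, hmod⟩ := ihb hdb
        exact ⟨a + x, hadd _ ha _ hx, by omega, hmod.add_left a⟩
      · obtain ⟨x, hx, hlt, hmod⟩ := iha hda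
        refine ⟨b + x, hadd _ hb _ hx, by omega, ?_⟩
        rw [add_comm a b]
        exact hmod.add_left b
  have hone : ∀ j, j + 1 < nsMult S → ∀ s ∈ gen A, s ≡ j + 1 [MOD nsMult S] →
      ∃ c ∈ gen A, c ≡ 1 [MOD nsMult S] := by
    intro j
    induction j with
    | zero => intro _ s hs h; exact ⟨s, hs, h⟩
    | succ j ih =>
      intro hj s hs h
      obtain ⟨x, hx, -, hmod⟩ := hpred s hs (by
        rw [h.dvd_iff (dvd_refl _)]
        exact Nat.not_dvd_of_pos_of_lt (by omega) hj)
      exact ih (by omega) x hx (Nat.ModEq.add_right_cancel' 1 (hmod.trans h))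
  have hnum : IsNumSgp (gen A) := by
    refine ⟨h0, hadd, ?_⟩
    have hnd := msg_not_dvd hS (hAmsg _ h1A) (by omega)
    have hlt : n ⟨1, by omega⟩ % nsMult S < nsMult S := Nat.mod_lt _ (by omega)
    have hne : n ⟨1, by omega⟩ % nsMult S ≠ 0 := fun h => hnd (Nat.dvd_of_mod_eq_zero h)
    obtain ⟨c, hc, hc1⟩ := hone (n ⟨1, by omega⟩ % nsMult S - 1) (by omega) _ (hAS _ h1A) (by
      rw [Nat.sub_add_cancel (by omega)]
      exact (Nat.mod_modEq _ _).symm)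
    refine (Set.finite_lt_nat (nsMult S * c)).subset ?_
    intro N hN
    by_contra hge
    simp only [Set.mem_ofPred_eq, not_lt] at hge
    apply hN
    have hle : N % nsMult S * c ≤ N :=
      (Nat.mul_le_mul_right c (Nat.mod_lt N (by omega)).le).trans hge
    have hmod : N % nsMult S * c ≡ N [MOD nsMult S] := by
      have := (Nat.mod_modEq N (nsMult S)).mul hc1
      simpa using this
    obtain ⟨k, hk⟩ := (Nat.modEq_iff_dvd' hle).1 hmod
    have : N = N % nsMult S * c + k * nsMult S := by
      rw [mul_comm k, ← hk]; omega
    rw [this]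
    exact hadd _ (hmul _ hc _) _ (hmul _ hmA _)
  refine ⟨⟨hnum, ?_⟩, ?_⟩
  · rw [hmult]
    intro i hi hi1
    obtain ⟨h2, h3⟩ := aperyW_mem hnum (Nat.pos_of_ne_zero hm0) (i + 1)
    have h3' : aperyW (gen A) (nsMult S) (i + 1) ≡ i + 1 [MOD nsMult S] := h3
    obtain ⟨x, hx, hlt, hmod⟩ := hpred _ h2 (by
      rw [h3'.dvd_iff (dvd_refl _)]
      exact Nat.not_dvd_of_pos_of_lt (by omega) hi1)
    exact lt_of_le_of_lt
      (aperyW_le hx (Nat.ModEq.add_right_cancel' 1 (hmod.trans h3'))) hlt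
  · have hmA' : msg (gen A) = A := by
      apply Set.Subset.antisymm
      · intro x hx
        have key : ∀ y ∈ gen A, y = 0 ∨ y ∈ A ∨ ∃ a ∈ gen A, a ≠ 0 ∧ ∃ b ∈ gen A, b ≠ 0 ∧ y = a + b := by
          intro y hy
          refine AddSubmonoid.closure_induction (motive := fun y _ => y = 0 ∨ y ∈ A ∨
            ∃ a ∈ gen A, a ≠ 0 ∧ ∃ b ∈ gen A, b ≠ 0 ∧ y = a + b) ?_ ?_ ?_ hy
          · intro y hy; exact Or.inr (Or.inl hy)
          · exact Or.inl rfl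
          · intro a b ha hb iha ihb
            by_cases ha0 : a = 0
            · subst ha0; simpa using ihb
            by_cases hb0 : b = 0
            · subst hb0; simpa using iha
            exact Or.inr (Or.inr ⟨a, ha, ha0, b, hb, hb0, rfl⟩)
        rcases key x hx.1 with h | h | ⟨a, ha, ha0, b, hb, hb0, h⟩
        · exact absurd h hx.2.1
        · exact h
        · exact absurd h (hx.2.2 a ha ha0 b hb hb0)
      · intro x hx
        have h := hAmsg x hx
        exact ⟨hAS x hx, h.2.1, fun a ha ha0 b hb hb0 =>
          h.2.2 a (hsub a ha) ha0 b (hsub b hb) hb0⟩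
    have hinj : Function.Injective fun i : Fin e => n i.castSucc :=
      fun a b h => Fin.castSucc_injective e (hmono.injective h)
    rw [hmA', hmsg, hA, ← Set.image_univ, ← Set.image_univ,
      Set.ncard_image_of_injective _ hmono.injective,
      Set.ncard_image_of_injective _ hinj]
    simp [Set.ncard_univ]
end

section
/- Let S = ⟨n₁ < n₂ < ⋯ < n_e⟩ be a MANS-semigroup with n₁ ≥ 3 and e ≥ 2, with minimal generators n₁ < n₂ < ⋯ < n_e. If n_e mod n₁ < n₁ − 1, then n_e + 1 is suitably monotone for S; that is, writing Ap(S, n₁) = {w(0), …, w(n₁−1)}, one has n_e < n_e + 1, n_e mod n₁ < (n_e + 1) mod n₁, and w(((n_e+1) mod n₁) − 1) < n_e + 1 < w((n_e+1) mod n₁). -/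
theorem aperyW_mem_aux (S : Set ℕ) (hS : IsNumSgp S) (m i : ℕ) (hm : 0 < m) :
    aperyW S m i ∈ S ∧ aperyW S m i % m = i % m := by
  have hne : {s | s ∈ S ∧ s % m = i % m}.Nonempty := by
    obtain ⟨B, hB⟩ := hS.2.2.bddAbove
    refine ⟨i + m * (B + 1), ?_, by simp⟩
    by_contra h
    have := hB h
    have : B + 1 ≤ m * (B + 1) := Nat.le_mul_of_pos_left _ hm
    omega
  exact Nat.sInf_mem hne

theorem aperyW_le_aux (S : Set ℕ) (m i s : ℕ) (hs : s ∈ S) (h : s % m = i % m) :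
    aperyW S m i ≤ s := Nat.sInf_le ⟨hs, h⟩

theorem mul_mem_aux (S : Set ℕ) (hS : IsNumSgp S) (m k : ℕ) (hm : m ∈ S) : m * k ∈ S := by
  induction k with
  | zero => simpa using hS.1
  | succ k ih => rw [Nat.mul_succ]; exact hS.2.1 _ ih _ hm

theorem core_aux (S : Set ℕ) (m N : ℕ) (hM : IsMANS S) (hm : m = nsMult S) (h3 : 3 ≤ m)
    (hmS : m ∈ S) (hNm : m < N) (hN : N ∈ msg S) (hmax : ∀ x ∈ msg S, x ≤ N)
    (hlt : N % m < m - 1) :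
    N % m < (N + 1) % m ∧ aperyW S m ((N + 1) % m - 1) < N + 1 ∧
      N + 1 < aperyW S m ((N + 1) % m) := by
  obtain ⟨hS, hw⟩ := hM
  rw [← hm] at hw
  obtain ⟨hNS, hN0, hNirr⟩ := hN
  -- smaller elements in the class of N do not exist
  have key : ∀ s ∈ S, s ≠ 0 → s % m = N % m → N ≤ s := by
    intro s hs hs0 hmod
    by_contra hlt'
    have hd : m ∣ N - s := (Nat.modEq_iff_dvd' (by omega)).1 hmod
    obtain ⟨k, hk⟩ := hd
    exact hNirr s hs hs0 (m * k) (mul_mem_aux S hS m k hmS) (by omega) (by omega)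
  have hr0 : N % m ≠ 0 := by
    intro h
    have := key m hmS (by omega) (by simp [h])
    omega
  have hr1 : (N + 1) % m = N % m + 1 := by
    rw [Nat.add_mod, Nat.mod_eq_of_lt (show 1 < m by omega), Nat.mod_eq_of_lt (by omega)]
  rw [hr1]
  have hwr : aperyW S m (N % m) = N := by
    apply le_antisymm
    · exact aperyW_le_aux S m _ N hNS (by simp)
    · obtain ⟨h1, h2⟩ := aperyW_mem_aux S hS m (N % m) (by omega)
      rw [Nat.mod_mod] at h2
      refine key _ h1 ?_ h2
      intro h0
      rw [h0] at h2
      simp at h2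
      omega
  have hstep := hw (N % m) (by omega) (by omega)
  rw [hwr] at hstep
  refine ⟨by omega, by rw [Nat.add_sub_cancel, hwr]; omega, ?_⟩
  by_contra hcon
  have heq : aperyW S m (N % m + 1) = N + 1 := by omega
  obtain ⟨hS1, -⟩ := aperyW_mem_aux S hS m (N % m + 1) (by omega)
  rw [heq] at hS1
  have hnot : N + 1 ∉ msg S := fun h => by have := hmax _ h; omega
  have : ∃ a ∈ S, a ≠ 0 ∧ ∃ b ∈ S, b ≠ 0 ∧ N + 1 = a + b := by
    by_contra hh
    push Not at hh
    exact hnot ⟨hS1, by omega, hh⟩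
  obtain ⟨a, ha, ha0, b, hb, hb0, hab⟩ := this
  rcases Nat.lt_or_ge (a % m) 2 with h | h
  · have hge : m ≤ a := by rw [hm]; exact Nat.sInf_le ⟨ha, ha0⟩
    rcases (by omega : a % m = 0 ∨ a % m = 1) with h | h
    · have hb' : b % m = (N % m + 1) % m := by
        have : (N + 1) % m = b % m := by rw [hab, Nat.add_mod, h]; simp
        rw [← this, ← hr1, Nat.mod_mod]
      have := aperyW_le_aux S m _ b hb hb'
      omega
    · have hb' : b % m = N % m := by
        have h1 : (1 + b) ≡ (1 + N) [MOD m] := by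
          have : a ≡ 1 [MOD m] := by
            unfold Nat.ModEq; rw [h, Nat.mod_eq_of_lt (by omega)]
          have := this.add_right b
          rw [← hab, Nat.add_comm N 1] at this
          exact this.symm
        exact Nat.ModEq.add_left_cancel' 1 h1
      have := key b hb hb0 hb'
      omega
  · obtain ⟨i, hi⟩ : ∃ i, a % m = i + 1 := ⟨a % m - 1, by omega⟩
    have him : a % m < m := Nat.mod_lt _ (by omega)
    have h1 := hw i (by omega) (by omega)
    have h2 := aperyW_le_aux S m (i + 1) a ha (by rw [← hi, Nat.mod_mod])
    obtain ⟨hc, hcm⟩ := aperyW_mem_aux S hS m i (by omega)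
    set c := aperyW S m i
    have hc0 : c ≠ 0 := by
      intro h0
      rw [h0, Nat.mod_eq_of_lt (show i < m by omega)] at hcm
      simp at hcm
      omega
    have hmod : (c + b) % m = N % m := by
      have e1 : c + 1 ≡ a [MOD m] := by
        have : c ≡ i [MOD m] := hcm
        refine (this.add_right 1).trans ?_
        rw [← hi]; exact Nat.mod_modEq _ _
      have e2 : c + b + 1 ≡ N + 1 [MOD m] := by
        rw [hab]
        have := e1.add_right b
        rwa [show c + 1 + b = c + b + 1 by omega] at this
      exact Nat.ModEq.add_right_cancel' 1 e2
    have := key (c + b) (hS.2.1 c hc b hb) (by omega) hmod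
    exact hNirr c hc hc0 b hb hb0 (by omega)

theorem stmt19 (S : Set ℕ) (e : ℕ) (he : 2 ≤ e) (n : Fin e → ℕ)
    (hmono : StrictMono n) (hmsg : msg S = Set.range n)
    (h3 : 3 ≤ n ⟨0, by omega⟩) (hM : IsMANS S)
    (hlt : n ⟨e - 1, by omega⟩ % n ⟨0, by omega⟩ < n ⟨0, by omega⟩ - 1) :
    n ⟨e - 1, by omega⟩ < n ⟨e - 1, by omega⟩ + 1 ∧
    n ⟨e - 1, by omega⟩ % n ⟨0, by omega⟩ < (n ⟨e - 1, by omega⟩ + 1) % n ⟨0, by omega⟩ ∧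
    aperyW S (n ⟨0, by omega⟩) ((n ⟨e - 1, by omega⟩ + 1) % n ⟨0, by omega⟩ - 1)
      < n ⟨e - 1, by omega⟩ + 1 ∧
    n ⟨e - 1, by omega⟩ + 1 < aperyW S (n ⟨0, by omega⟩) ((n ⟨e - 1, by omega⟩ + 1) % n ⟨0, by omega⟩) := by
  have hmem : ∀ i, n i ∈ msg S := fun i => hmsg ▸ Set.mem_range_self i
  have hmult : n ⟨0, by omega⟩ = nsMult S := by
    have h0 := hmem ⟨0, by omega⟩
    have hne : {x | x ∈ S ∧ x ≠ 0}.Nonempty := ⟨_, h0.1, h0.2.1⟩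
    have hmm : nsMult S ∈ {x | x ∈ S ∧ x ≠ 0} := Nat.sInf_mem hne
    have hmin : ∀ x ∈ S, x ≠ 0 → nsMult S ≤ x := fun x hx hx0 => Nat.sInf_le ⟨hx, hx0⟩
    have : nsMult S ∈ msg S := by
      refine ⟨hmm.1, hmm.2, fun a ha ha0 b hb hb0 h => ?_⟩
      have := hmin a ha ha0
      omega
    rw [hmsg] at this
    obtain ⟨j, hj⟩ := this
    apply le_antisymm
    · rw [← hj]
      exact hmono.monotone (Fin.mk_le_of_le_val (Nat.zero_le _))
    · exact hmin _ h0.1 h0.2.1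
  refine ⟨by omega, core_aux S _ _ hM hmult h3 (hmem _).1 ?_ (hmem _) ?_ hlt⟩
  · apply hmono
    rw [Fin.mk_lt_mk]
    omega
  · intro x hx
    rw [hmsg] at hx
    obtain ⟨j, rfl⟩ := hx
    apply hmono.monotone
    rw [Fin.le_def]
    have := j.2
    simp only
    omega
end
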